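/- Let e ∈ H_n(ℍ_ℂ) be such that ê is a unitary matrix, and let T : M_n(ℍ_ℂ) → M_n(ℍ_ℂ) be any ℂ-linear bijection satisfying T(x·e*·y) = T(x)·T(y), T(e·x*·e) = T(x)*, and T(xᵈ) = T(x)ᵈ for all x, y ∈ M_n(ℍ_ℂ). Then: (i) for every x ∈ H_n(ℍ_ℂ), the value dt_n(T(x)) does not depend on the choice of such T; and (ii) dt_n(x) = dt_n(T(x)) · dt_n(e) for every x ∈ H_n(ℍ_ℂ). -/

import Mathlib

/-!
`A ↦ Â` is an isomorphism of `ℂ`-algebras from `M_n(ℍ_ℂ)` onto `M_{2n}(ℂ)`. Taking the Schur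
complement of the entry `x₁₁` shows that, on `H_n(ℍ_ℂ)`, `dt` is a scalar square root of `det x̂`
wherever `x₁₁ ≠ 0`, hence everywhere by continuity. As `e* = e⁻¹`, the map `x ↦ T(x e)` is an
endomorphism of a full matrix algebra, so it preserves `det x̂`. Thus `dt(x)` and `dt(T(x)) dt(e)`
are continuous square roots of the same function on `H_n(ℍ_ℂ)`, and they agree at `e` because
`T(e) = 1`. On the complex line through `e` and `x` this function is a nonzero polynomial; the
complement of its finitely many zeros is connected and dense, so the two square roots agree on the
whole line. As `dt(e)` is invertible, `dt(T(x))` does not depend on `T`.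
-/

noncomputable section

open Matrix

/-- The biquaternions `ℍ_ℂ`: quaternions with complex coefficients. -/
abbrev HC : Type := Quaternion ℂ

/-- The embedding `ℂ ⊆ ℍ_ℂ` as scalar biquaternions. -/
def cq (z : ℂ) : HC := ⟨z, 0, 0, 0⟩

/-- The `ℂ`-linear involution `x ↦ x⋄` (quaternion conjugation). -/
def qdia (x : HC) : HC := ⟨x.re, -x.imI, -x.imJ, -x.imK⟩

/-- Coefficientwise complex conjugation `x ↦ x̄`. -/
def qbar (x : HC) : HC :=
  ⟨starRingEnd ℂ x.re, starRingEnd ℂ x.imI, starRingEnd ℂ x.imJ, starRingEnd ℂ x.imK⟩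

/-- The conjugate-linear involution `x* = (x̄)⋄`. -/
def qstar (x : HC) : HC := qdia (qbar x)

/-- The natural (Euclidean/product) topology on the biquaternions `ℍ_ℂ ≅ ℂ⁴`. -/
instance : TopologicalSpace HC :=
  TopologicalSpace.induced (fun q : HC => (q.re, q.imI, q.imJ, q.imK)) inferInstance

/-- The 2×2 complex matrix `x̂` associated to a biquaternion `x`. -/
def hat (x : HC) : Matrix (Fin 2) (Fin 2) ℂ :=
  !![x.re + Complex.I * x.imI, x.imJ + Complex.I * x.imK;
     -x.imJ + Complex.I * x.imK, x.re - Complex.I * x.imI]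

/-- The `2n × 2n` complex matrix `Â` obtained by replacing every biquaternion entry `a`
of `A` by the 2×2 block `â`. -/
def hatM {n : ℕ} (A : Matrix (Fin n) (Fin n) HC) :
    Matrix (Fin n × Fin 2) (Fin n × Fin 2) ℂ :=
  Matrix.of fun p q => hat (A p.1 q.1) p.2 q.2

/-- `A` is `⋄`-hermitian: `Aᵈ = A`, i.e. `(A j i)⋄ = A i j` for all `i j`.
`H_n(ℍ_ℂ)` is the collection of all such matrices. -/
def IsHerm {n : ℕ} (A : Matrix (Fin n) (Fin n) HC) : Prop :=
  ∀ i j, qdia (A j i) = A i j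

/-- The defining properties of the sequence of determinants `(dt_n)_{n ≥ 1}`:
`D n` plays the role of `dt_{n+1} : H_{n+1}(ℍ_ℂ) → ℍ_ℂ`.
(i) continuity on `H_{n+1}(ℍ_ℂ)`; (ii) `dt₁((x₁₁)) = x₁₁`;
(iii) the inductive formula for `dt_{n+1}` when `x₁₁ ≠ 0`. -/
def IsDtSeq (D : ∀ n : ℕ, Matrix (Fin (n + 1)) (Fin (n + 1)) HC → HC) : Prop :=
  (∀ n : ℕ, ContinuousOn (D n) {A | IsHerm A}) ∧
  (∀ A : Matrix (Fin 1) (Fin 1) HC, IsHerm A → D 0 A = A 0 0) ∧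
  (∀ (n : ℕ) (A : Matrix (Fin (n + 2)) (Fin (n + 2)) HC), IsHerm A → A 0 0 ≠ 0 →
    D (n + 1) A = A 0 0 *
      D n (Matrix.of fun i j : Fin (n + 1) =>
        A i.succ j.succ - Ring.inverse (A 0 0) * A i.succ 0 * A 0 j.succ))

/-- The conjugate transpose `A*` of a matrix of biquaternions
(transpose with `*` applied entrywise). -/
def mstarB {n : ℕ} (A : Matrix (Fin n) (Fin n) HC) : Matrix (Fin n) (Fin n) HC :=
  Matrix.of fun i j => qstar (A j i)

/-- The transpose `Aᵈ` with `⋄` applied entrywise. -/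
def mdiaB {n : ℕ} (A : Matrix (Fin n) (Fin n) HC) : Matrix (Fin n) (Fin n) HC :=
  Matrix.of fun i j => qdia (A j i)

lemma qdia_eq_star (x : HC) : qdia x = star x := by
  ext <;> simp [qdia]

lemma qdia_add (x y : HC) : qdia (x + y) = qdia x + qdia y := by
  simp only [qdia_eq_star]
  ext <;> simp [add_comm]

lemma qdia_sub (x y : HC) : qdia (x - y) = qdia x - qdia y := by
  simp only [qdia_eq_star]
  ext <;> simp [neg_add_eq_sub]

lemma qdia_smul (z : ℂ) (x : HC) : qdia (z • x) = z • qdia x := by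
  simp only [qdia_eq_star, Quaternion.star_smul]

lemma qdia_mul (x y : HC) : qdia (x * y) = qdia y * qdia x := by
  simp only [qdia_eq_star, star_mul]

section Matrices

variable {n : ℕ} {A : Matrix (Fin n) (Fin n) HC}

lemma isHerm_iff_isHermitian : IsHerm A ↔ A.IsHermitian := by
  simp only [IsHerm, qdia_eq_star, Matrix.IsHermitian.ext_iff]

lemma isHerm_iff_mdiaB_eq : IsHerm A ↔ mdiaB A = A := Matrix.ext_iff

lemma IsHerm.map_of_map_mdiaB {T : Matrix (Fin n) (Fin n) HC → Matrix (Fin n) (Fin n) HC}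
    (hT : ∀ x, T (mdiaB x) = mdiaB (T x)) (x : Matrix (Fin n) (Fin n) HC) (hx : IsHerm x) :
    IsHerm (T x) := by
  rw [isHerm_iff_mdiaB_eq] at hx ⊢
  rw [← hT, hx]

lemma isHerm_one : IsHerm (1 : Matrix (Fin n) (Fin n) HC) :=
  isHerm_iff_isHermitian.2 Matrix.isHermitian_one

lemma IsHerm.lineMap {B : Matrix (Fin n) (Fin n) HC} (hA : IsHerm A) (hB : IsHerm B) (z : ℂ) :
    IsHerm (AffineMap.lineMap A B z) := by
  intro i j
  simp only [AffineMap.lineMap_apply_module, Matrix.add_apply, Matrix.smul_apply, qdia_add,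
    qdia_smul, hA i j, hB i j]

lemma IsHerm.coe_re_apply_self (hA : IsHerm A) (i : Fin n) : ((A i i).re : HC) = A i i :=
  (Quaternion.star_eq_self.1 (qdia_eq_star (A i i) ▸ hA i i)).symm

/-- The Schur complement of the top left entry of `A`, with the factors in the order used in the
recursion defining `dt`. It is the lower right block of `A` if that entry is not a unit, as
`Ring.inverse` then vanishes. -/
def schurComplement {R : Type*} [Ring R] (A : Matrix (Fin (n + 1)) (Fin (n + 1)) R) :
    Matrix (Fin n) (Fin n) R :=
  Matrix.of fun i j => A i.succ j.succ - Ring.inverse (A 0 0) * A i.succ 0 * A 0 j.succ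

lemma schurComplement_one {R : Type*} [Ring R] :
    schurComplement (1 : Matrix (Fin (n + 1)) (Fin (n + 1)) R) = 1 := by
  ext1 i j
  simp [schurComplement, Matrix.one_apply, Fin.succ_ne_zero]

lemma inverse_coe (a : ℂ) : Ring.inverse (a : HC) = (a⁻¹ : ℂ) := by
  rcases eq_or_ne a 0 with rfl | ha
  · simp
  · exact Ring.inverse_unit ((Units.mk0 a ha).map (algebraMap ℂ HC).toMonoidHom)

lemma IsHerm.schurComplement {A : Matrix (Fin (n + 1)) (Fin (n + 1)) HC} (hA : IsHerm A) :
    IsHerm (schurComplement A) := by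
  intro i j
  simp only [_root_.schurComplement, Matrix.of_apply]
  rw [← hA.coe_re_apply_self 0, inverse_coe, qdia_sub, qdia_mul, qdia_mul, hA, hA, hA,
    qdia_eq_star, Quaternion.star_coe, ← mul_assoc, ← Quaternion.coe_commutes, mul_assoc]

/-- The `ℂ`-algebra isomorphism `x ↦ x̂` from the biquaternions onto `M₂(ℂ)`. -/
def hatEquiv : HC ≃ₐ[ℂ] Matrix (Fin 2) (Fin 2) ℂ where
  toFun := hat
  invFun M := ⟨(M 0 0 + M 1 1) / 2, -Complex.I * (M 0 0 - M 1 1) / 2,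
    (M 0 1 - M 1 0) / 2, -Complex.I * (M 0 1 + M 1 0) / 2⟩
  left_inv x := by
    ext <;> simp only [hat, of_apply, cons_val', cons_val_zero, cons_val_one, cons_val_fin_one] <;>
      grind [Complex.I_mul_I]
  right_inv M := by
    simp only [← Matrix.ext_iff, Fin.forall_fin_two, hat, of_apply, cons_val', cons_val_zero,
      cons_val_one, cons_val_fin_one]
    grind [Complex.I_mul_I]
  map_mul' x y := by
    simp only [hat, mul_fin_two, ← Matrix.ext_iff, Fin.forall_fin_two, of_apply, cons_val',
      cons_val_zero, cons_val_one, cons_val_fin_one, Quaternion.re_mul, Quaternion.imI_mul,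
      Quaternion.imJ_mul, Quaternion.imK_mul]
    grind [Complex.I_mul_I]
  map_add' x y := by
    simp only [hat, ← Matrix.ext_iff, Fin.forall_fin_two, Matrix.add_apply, of_apply, cons_val',
      cons_val_zero, cons_val_one, cons_val_fin_one, Quaternion.re_add, Quaternion.imI_add,
      Quaternion.imJ_add, Quaternion.imK_add]
    grind
  commutes' z := by
    ext i j
    fin_cases i <;> fin_cases j <;> simp [hat, Matrix.algebraMap_matrix_apply]

lemma hatEquiv_apply (x : HC) : hatEquiv x = hat x := rfl

lemma hat_coe (a : ℂ) : hat (a : HC) = a • (1 : Matrix (Fin 2) (Fin 2) ℂ) := by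
  rw [← Algebra.algebraMap_eq_smul_one]
  exact hatEquiv.commutes a

/-- The `ℂ`-algebra isomorphism `A ↦ Â` from `M_n(ℍ_ℂ)` onto `M_{2n}(ℂ)`. -/
def hatMEquiv (n : ℕ) :
    Matrix (Fin n) (Fin n) HC ≃ₐ[ℂ] Matrix (Fin n × Fin 2) (Fin n × Fin 2) ℂ :=
  hatEquiv.mapMatrix.trans (Matrix.compAlgEquiv (Fin n) (Fin 2) ℂ ℂ)

lemma hatMEquiv_apply (A : Matrix (Fin n) (Fin n) HC) : hatMEquiv n A = hatM A := rfl

lemma hat_qstar (x : HC) : hat (qstar x) = (hat x)ᴴ := by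
  ext k l
  fin_cases k <;> fin_cases l <;> simp [hat, qstar, qdia, qbar]

lemma hatM_mstarB (A : Matrix (Fin n) (Fin n) HC) : hatM (mstarB A) = (hatM A)ᴴ := by
  ext ⟨i, k⟩ ⟨j, l⟩
  exact Matrix.ext_iff.2 (hat_qstar (A j i)) k l

lemma mstarB_mul_self_eq_one_iff : mstarB A * A = 1 ↔ (hatM A)ᴴ * hatM A = 1 := by
  rw [← (hatMEquiv n).injective.eq_iff, map_mul, map_one, hatMEquiv_apply, hatMEquiv_apply,
    hatM_mstarB]

lemma mul_mstarB_self_eq_one_iff : A * mstarB A = 1 ↔ hatM A * (hatM A)ᴴ = 1 := by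
  rw [← (hatMEquiv n).injective.eq_iff, map_mul, map_one, hatMEquiv_apply, hatMEquiv_apply,
    hatM_mstarB]

lemma det_hatM_ne_zero (hA : IsUnit A) : (hatM A).det ≠ 0 :=
  ((Matrix.isUnit_iff_isUnit_det _).1 (hA.map (hatMEquiv n))).ne_zero

lemma det_hatM_mul (A B : Matrix (Fin n) (Fin n) HC) :
    (hatM (A * B)).det = (hatM A).det * (hatM B).det := by
  rw [← hatMEquiv_apply, map_mul, Matrix.det_mul, hatMEquiv_apply, hatMEquiv_apply]

lemma det_hatM_algHom (S : Matrix (Fin n) (Fin n) HC →ₐ[ℂ] Matrix (Fin n) (Fin n) HC)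
    (A : Matrix (Fin n) (Fin n) HC) : (hatM (S A)).det = (hatM A).det := by
  have h := Matrix.det_map'
    (((hatMEquiv n).toAlgHom.comp S).comp (hatMEquiv n).symm.toAlgHom) (hatMEquiv n A)
  simp only [AlgHom.comp_apply, AlgEquiv.toAlgHom_apply, AlgEquiv.symm_apply_apply] at h
  exact h

lemma hat_schurComplement_apply {A : Matrix (Fin (n + 1)) (Fin (n + 1)) HC} {a : ℂ}
    (hA : A 0 0 = a) (i j : Fin n) : hat (schurComplement A i j) =
      hat (A i.succ j.succ) - a⁻¹ • (hat (A i.succ 0) * hat (A 0 j.succ)) := by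
  rw [schurComplement, Matrix.of_apply, hA, inverse_coe, ← hatEquiv_apply, map_sub, map_mul,
    map_mul]
  simp only [hatEquiv_apply, hat_coe, smul_mul_assoc, one_mul]

lemma det_hatM_eq_sq_mul_det_schurComplement
    {A : Matrix (Fin (n + 1)) (Fin (n + 1)) HC} {a : ℂ} (ha : a ≠ 0) (hA : A 0 0 = a) :
    (hatM A).det = a ^ 2 * (hatM (schurComplement A)).det := by
  let σ : Fin (n + 1) × Fin 2 ≃ Fin 2 ⊕ Fin n × Fin 2 :=
    ((finSuccEquiv n).prodCongr (Equiv.refl (Fin 2))).trans optionProdEquiv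
  set M := (hatM A).reindex σ σ with hM
  have h₁₁ : M.toBlocks₁₁ = a • 1 := by
    rw [← hat_coe, ← hA]
    rfl
  let _ : Invertible (a • (1 : Matrix (Fin 2) (Fin 2) ℂ)) :=
    ⟨a⁻¹ • 1, by simp [smul_smul, ha], by simp [smul_smul, ha]⟩
  have hinv : ⅟(a • (1 : Matrix (Fin 2) (Fin 2) ℂ)) = a⁻¹ • 1 := rfl
  have hschur : M.toBlocks₂₂ - M.toBlocks₂₁ * ⅟(a • (1 : Matrix (Fin 2) (Fin 2) ℂ)) *
      M.toBlocks₁₂ = hatM (schurComplement A) := by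
    rw [hinv, Matrix.mul_smul, Matrix.mul_one, Matrix.smul_mul]
    ext ⟨i, k⟩ ⟨j, l⟩
    exact (Matrix.ext_iff.2 (hat_schurComplement_apply hA i j) k l).symm
  rw [← Matrix.det_reindex_self σ, ← hM, ← M.fromBlocks_toBlocks, h₁₁, Matrix.det_fromBlocks₁₁,
    hschur]
  simp only [Matrix.det_smul, Matrix.det_one, Fintype.card_fin, mul_one]

end Matrices

lemma continuous_coords : Continuous fun q : HC => (q.re, q.imI, q.imJ, q.imK) :=
  continuous_induced_dom

lemma continuous_iff_coords {X : Type*} [TopologicalSpace X] {f : X → HC} :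
    Continuous f ↔ Continuous fun x => ((f x).re, (f x).imI, (f x).imJ, (f x).imK) :=
  continuous_induced_rng

@[fun_prop]
lemma continuous_re : Continuous fun q : HC => q.re := continuous_coords.fst

@[fun_prop]
lemma continuous_imI : Continuous fun q : HC => q.imI := continuous_coords.snd.fst

@[fun_prop]
lemma continuous_imJ : Continuous fun q : HC => q.imJ := continuous_coords.snd.snd.fst

@[fun_prop]
lemma continuous_imK : Continuous fun q : HC => q.imK := continuous_coords.snd.snd.snd

lemma continuous_coe : Continuous fun z : ℂ => (z : HC) := by
  rw [continuous_iff_coords]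
  simp only [Quaternion.re_coe, Quaternion.imI_coe, Quaternion.imJ_coe, Quaternion.imK_coe]
  fun_prop

instance : T2Space HC :=
  .of_injective_continuous (fun x y h => by simp only [Prod.mk.injEq] at h; ext <;> tauto)
    continuous_coords

instance : IsTopologicalAddGroup HC where
  continuous_add := by
    simp only [continuous_iff_coords, Quaternion.re_add, Quaternion.imI_add, Quaternion.imJ_add,
      Quaternion.imK_add]
    fun_prop
  continuous_neg := by
    simp only [continuous_iff_coords, Quaternion.re_neg, Quaternion.imI_neg, Quaternion.imJ_neg,
      Quaternion.imK_neg]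
    fun_prop

instance : ContinuousSMul ℂ HC where
  continuous_smul := by
    simp only [continuous_iff_coords, Quaternion.re_smul, Quaternion.imI_smul, Quaternion.imJ_smul,
      Quaternion.imK_smul]
    fun_prop

lemma continuous_hatM {n : ℕ} : Continuous (hatM (n := n)) :=
  ((hatMEquiv n).toLinearMap).continuous_of_finiteDimensional

lemma eqOn_isHerm_of_eq_of_apply_zero_ne_zero {X : Type*} [TopologicalSpace X] [T2Space X]
    {n : ℕ} {φ ψ : Matrix (Fin (n + 1)) (Fin (n + 1)) HC → X}
    (hφ : ContinuousOn φ {A | IsHerm A}) (hψ : ContinuousOn ψ {A | IsHerm A})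
    (h : ∀ A, IsHerm A → A 0 0 ≠ 0 → φ A = ψ A) : Set.EqOn φ ψ {A | IsHerm A} := by
  intro A hA
  by_cases hA0 : A 0 0 = 0
  · let γ : ℂ → Matrix (Fin (n + 1)) (Fin (n + 1)) HC := AffineMap.lineMap A 1
    have hγ : Continuous γ := AffineMap.lineMap_continuous
    have hγherm (z : ℂ) : IsHerm (γ z) := hA.lineMap isHerm_one z
    have hγ0 (z : ℂ) : γ z 0 0 = z := by
      simpa [γ, AffineMap.lineMap_apply_module, hA0] using
        (Algebra.algebraMap_eq_smul_one (A := HC) z).symm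
    have heq : φ ∘ γ = ψ ∘ γ := by
      refine (hφ.comp_continuous hγ hγherm).ext_on (dense_compl_singleton (0 : ℂ))
        (hψ.comp_continuous hγ hγherm) fun z hz => h _ (hγherm z) ?_
      rw [hγ0, ← Quaternion.coe_zero]
      exact Quaternion.coe_injective.ne hz
    simpa [γ] using congrFun heq 0
  · exact h A hA hA0

section DtSeq

variable {D : ∀ m : ℕ, Matrix (Fin (m + 1)) (Fin (m + 1)) HC → HC}

lemma IsDtSeq.succ_apply (hD : IsDtSeq D) {n : ℕ} {A : Matrix (Fin (n + 2)) (Fin (n + 2)) HC}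
    (hA : IsHerm A) (h0 : A 0 0 ≠ 0) : D (n + 1) A = A 0 0 * D n (schurComplement A) :=
  hD.2.2 n A hA h0

lemma IsDtSeq.coe_re (hD : IsDtSeq D) {n : ℕ} {A : Matrix (Fin (n + 1)) (Fin (n + 1)) HC}
    (hA : IsHerm A) : ((D n A).re : HC) = D n A := by
  induction n with
  | zero => rw [hD.2.1 A hA, hA.coe_re_apply_self]
  | succ n ih =>
    have hc := hD.1 (n + 1)
    refine eqOn_isHerm_of_eq_of_apply_zero_ne_zero
      (continuous_coe.comp_continuousOn (continuous_re.comp_continuousOn hc)) hc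
      (fun B hB h0 => ?_) hA
    change ((D (n + 1) B).re : HC) = D (n + 1) B
    rw [hD.succ_apply hB h0, ← hB.coe_re_apply_self 0, ← ih hB.schurComplement,
      ← Quaternion.coe_mul, Quaternion.re_coe]

lemma IsDtSeq.re_sq (hD : IsDtSeq D) {n : ℕ} {A : Matrix (Fin (n + 1)) (Fin (n + 1)) HC}
    (hA : IsHerm A) : (D n A).re ^ 2 = (hatM A).det := by
  induction n with
  | zero =>
    have hdet : (hatM A).det = (hat (A 0 0)).det := by
      rw [← Matrix.det_reindex_self (Equiv.uniqueProd (Fin 2) (Fin 1))]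
      rfl
    rw [hdet, hD.2.1 A hA, ← hA.coe_re_apply_self, hat_coe]
    simp
  | succ n ih =>
    refine eqOn_isHerm_of_eq_of_apply_zero_ne_zero
      ((continuous_re.comp_continuousOn (hD.1 (n + 1))).pow 2)
      continuous_hatM.matrix_det.continuousOn (fun B hB h0 => ?_) hA
    have ha : (B 0 0).re ≠ 0 := fun h => h0 (by rw [← hB.coe_re_apply_self 0, h]; rfl)
    calc (D (n + 1) B).re ^ 2 = ((B 0 0).re * (D n (schurComplement B)).re) ^ 2 := by
          rw [hD.succ_apply hB h0, ← hB.coe_re_apply_self 0, ← hD.coe_re hB.schurComplement,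
            ← Quaternion.coe_mul, Quaternion.re_coe, Quaternion.re_coe, Quaternion.re_coe]
      _ = (B 0 0).re ^ 2 * (hatM (schurComplement B)).det := by
          rw [mul_pow, ih hB.schurComplement]
      _ = (hatM B).det :=
          (det_hatM_eq_sq_mul_det_schurComplement ha (hB.coe_re_apply_self 0).symm).symm

lemma IsDtSeq.apply_one (hD : IsDtSeq D) (n : ℕ) : D n 1 = 1 := by
  induction n with
  | zero => exact hD.2.1 1 isHerm_one
  | succ n ih =>
    rw [hD.succ_apply isHerm_one (by simp), schurComplement_one, ih, mul_one, Matrix.one_apply_eq]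

lemma IsDtSeq.isUnit_apply (hD : IsDtSeq D) {n : ℕ}
    {A : Matrix (Fin (n + 1)) (Fin (n + 1)) HC} (hA : IsHerm A) (hu : IsUnit A) :
    IsUnit (D n A) := by
  have hre : (D n A).re ≠ 0 := by
    rw [← pow_ne_zero_iff two_ne_zero, hD.re_sq hA]
    exact det_hatM_ne_zero hu
  rw [← hD.coe_re hA]
  exact hre.isUnit.map (algebraMap ℂ HC)

end DtSeq

lemma eq_of_sq_eq_of_countable_zeros {E 𝕜 : Type*} [AddCommGroup E] [Module ℝ E]
    [TopologicalSpace E] [ContinuousAdd E] [ContinuousSMul ℝ E] (hE : 1 < Module.rank ℝ E)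
    [Field 𝕜] [TopologicalSpace 𝕜] [T2Space 𝕜] [ContinuousInv₀ 𝕜] [ContinuousMul 𝕜]
    {f g : E → 𝕜} (hf : Continuous f) (hg : Continuous g) (hsq : f ^ 2 = g ^ 2)
    (hzeros : {z | g z = 0}.Countable) {z₀ : E} (hz₀ : g z₀ ≠ 0) (heq : f z₀ = g z₀) :
    f = g := by
  have : Nontrivial E := rank_pos_iff_nontrivial.1 (zero_lt_one.trans hE)
  have hconn := (hzeros.isConnected_compl_of_one_lt_rank hE).isPreconnected
  exact hf.ext_on (hzeros.dense_compl ℝ) hg <| hconn.eq_of_sq_eq hf.continuousOn hg.continuousOn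
    (fun z _ => congrFun hsq z) (fun hz => hz) hz₀ heq

lemma finite_setOf_det_lineMap_eq_zero {R ι : Type*} [CommRing R] [IsDomain R] [Fintype ι]
    [DecidableEq ι] {A : Matrix ι ι R} (hA : A.det ≠ 0) (B : Matrix ι ι R) :
    {z : R | (AffineMap.lineMap A B z : Matrix ι ι R).det = 0}.Finite := by
  let P : Polynomial R :=
    ((Polynomial.X : Polynomial R) • (B - A).map Polynomial.C + A.map Polynomial.C).det
  have hP (z : R) : P.eval z = (AffineMap.lineMap A B z : Matrix ι ι R).det := by
    rw [← Polynomial.coe_evalRingHom, RingHom.map_det, AffineMap.lineMap_apply_module']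
    congr 1
    ext i j
    simp
  have hP0 : P ≠ 0 := fun h => hA <| by
    rw [← Polynomial.coeff_det_X_add_C_zero (B - A) A]
    exact congrArg (Polynomial.coeff · 0) h
  simpa only [Polynomial.IsRoot.def, hP] using Polynomial.finite_setOfPred_isRoot hP0

lemma eqOn_isHerm_of_sq_eq_det {n : ℕ} {φ ψ : Matrix (Fin n) (Fin n) HC → ℂ}
    (hφ : ContinuousOn φ {A | IsHerm A}) (hψ : ContinuousOn ψ {A | IsHerm A})
    (hφsq : ∀ A, IsHerm A → φ A ^ 2 = (hatM A).det)
    (hψsq : ∀ A, IsHerm A → ψ A ^ 2 = (hatM A).det)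
    {e : Matrix (Fin n) (Fin n) HC} (he : IsHerm e) (hu : IsUnit e) (heq : φ e = ψ e) :
    Set.EqOn φ ψ {A | IsHerm A} := by
  intro A hA
  let γ : ℂ → Matrix (Fin n) (Fin n) HC := AffineMap.lineMap e A
  have hγ : Continuous γ := AffineMap.lineMap_continuous
  have hγherm (z : ℂ) : IsHerm (γ z) := he.lineMap hA z
  have hγhat (z : ℂ) : hatM (γ z) = AffineMap.lineMap (hatM e) (hatM A) z :=
    (hatMEquiv n).toLinearMap.toAffineMap.apply_lineMap e A z
  have hψzero (z : ℂ) : ψ (γ z) = 0 ↔ (hatM (γ z)).det = 0 := by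
    rw [← hψsq _ (hγherm z), sq_eq_zero_iff]
  have hline : φ ∘ γ = ψ ∘ γ := by
    refine eq_of_sq_eq_of_countable_zeros (z₀ := 0) (by simp)
      (hφ.comp_continuous hγ hγherm) (hψ.comp_continuous hγ hγherm)
      (funext fun z => (hφsq _ (hγherm z)).trans (hψsq _ (hγherm z)).symm) ?_ ?_ ?_
    · simp only [Function.comp_apply, hψzero, hγhat]
      exact (finite_setOf_det_lineMap_eq_zero (det_hatM_ne_zero hu) _).countable
    · rw [Function.comp_apply, ne_eq, hψzero]
      simpa [γ] using det_hatM_ne_zero hu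
    · simpa [γ] using heq
  simpa [γ] using congrFun hline 1

section Isotope

variable {R A B : Type*} [CommSemiring R] [Semiring A] [Algebra R A] [Semiring B] [Algebra R B]
  {e : Aˣ} {T : A →ₗ[R] B}

lemma map_unit_eq_one_of_isotope (hT : Function.Surjective T)
    (hmul : ∀ x y, T (x * e⁻¹.val * y) = T x * T y) : T e.val = 1 := by
  obtain ⟨u, hu⟩ := hT 1
  simpa [hu] using (hmul e u).symm

/-- For a unit `e`, the product `x * e⁻¹ * y` makes `A` an algebra with identity `e`, isomorphic to
`A` through `x ↦ x * e`. This is the algebra homomorphism `x ↦ T (x * e)` obtained by transporting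
along this isomorphism a surjective linear map `T` that is multiplicative for the new product. -/
def isotopeAlgHom (hT : Function.Surjective T)
    (hmul : ∀ x y, T (x * e⁻¹.val * y) = T x * T y) : A →ₐ[R] B :=
  AlgHom.ofLinearMap (T ∘ₗ LinearMap.mulRight R e.val)
    (by simpa using map_unit_eq_one_of_isotope hT hmul)
    (fun x y => by simp [← hmul, mul_assoc])

lemma isotopeAlgHom_mul_inv (hT : Function.Surjective T)
    (hmul : ∀ x y, T (x * e⁻¹.val * y) = T x * T y) (x : A) :
    isotopeAlgHom hT hmul (x * e⁻¹.val) = T x := by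
  simp [isotopeAlgHom]

end Isotope

section Determinant

variable {n : ℕ} {D : ∀ m : ℕ, Matrix (Fin (m + 1)) (Fin (m + 1)) HC → HC}

lemma det_hatM_apply_mul_det_hatM {e : (Matrix (Fin n) (Fin n) HC)ˣ}
    {T : Matrix (Fin n) (Fin n) HC →ₗ[ℂ] Matrix (Fin n) (Fin n) HC}
    (hT : Function.Surjective T) (hmul : ∀ x y, T (x * e⁻¹.val * y) = T x * T y)
    (x : Matrix (Fin n) (Fin n) HC) :
    (hatM (T x)).det * (hatM e.val).det = (hatM x).det := by
  rw [← isotopeAlgHom_mul_inv hT hmul, det_hatM_algHom, ← det_hatM_mul, mul_assoc,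
    Units.inv_mul, mul_one]

lemma IsDtSeq.apply_eq_mul (hD : IsDtSeq D) {e : (Matrix (Fin (n + 1)) (Fin (n + 1)) HC)ˣ}
    (he : IsHerm e.val)
    {T : Matrix (Fin (n + 1)) (Fin (n + 1)) HC →ₗ[ℂ] Matrix (Fin (n + 1)) (Fin (n + 1)) HC}
    (hT : Function.Surjective T) (hmul : ∀ x y, T (x * e⁻¹.val * y) = T x * T y)
    (hherm : ∀ x, IsHerm x → IsHerm (T x))
    {x : Matrix (Fin (n + 1)) (Fin (n + 1)) HC} (hx : IsHerm x) :
    D n x = D n (T x) * D n e.val := by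
  have hc : ContinuousOn (fun y => (D n y).re) {y | IsHerm y} :=
    continuous_re.comp_continuousOn (hD.1 n)
  have hcT : ContinuousOn (fun y => (D n (T y)).re * (D n e.val).re) {y | IsHerm y} :=
    (hc.comp T.continuous_of_finiteDimensional.continuousOn hherm).mul continuousOn_const
  have hsq (y : Matrix (Fin (n + 1)) (Fin (n + 1)) HC) (hy : IsHerm y) :
      ((D n (T y)).re * (D n e.val).re) ^ 2 = (hatM y).det := by
    rw [mul_pow, hD.re_sq (hherm y hy), hD.re_sq he, det_hatM_apply_mul_det_hatM hT hmul]
  have hbase : (D n e.val).re = (D n (T e.val)).re * (D n e.val).re := by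
    rw [map_unit_eq_one_of_isotope hT hmul, hD.apply_one, Quaternion.re_one, one_mul]
  have hre : (D n x).re = (D n (T x)).re * (D n e.val).re :=
    eqOn_isHerm_of_sq_eq_det hc hcT (fun y hy => hD.re_sq hy) hsq he e.isUnit hbase hx
  rw [← hD.coe_re hx, hre, Quaternion.coe_mul, hD.coe_re (hherm x hx), hD.coe_re he]

theorem statement6_general (hD : IsDtSeq D) (e : (Matrix (Fin (n + 1)) (Fin (n + 1)) HC)ˣ)
    (he : IsHerm e.val)
    {T T' : Matrix (Fin (n + 1)) (Fin (n + 1)) HC →ₗ[ℂ] Matrix (Fin (n + 1)) (Fin (n + 1)) HC}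
    (hT : Function.Surjective T) (hTmul : ∀ x y, T (x * e⁻¹.val * y) = T x * T y)
    (hTherm : ∀ x, IsHerm x → IsHerm (T x))
    (hT' : Function.Surjective T') (hT'mul : ∀ x y, T' (x * e⁻¹.val * y) = T' x * T' y)
    (hT'herm : ∀ x, IsHerm x → IsHerm (T' x))
    {x : Matrix (Fin (n + 1)) (Fin (n + 1)) HC} (hx : IsHerm x) :
    D n (T x) = D n (T' x) ∧ D n x = D n (T x) * D n e.val := by
  have h := hD.apply_eq_mul he hT hTmul hTherm hx
  have h' := hD.apply_eq_mul he hT' hT'mul hT'herm hx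
  exact ⟨(hD.isUnit_apply he e.isUnit).mul_right_cancel (h.symm.trans h'), h⟩

end Determinant

/-- Let `e ∈ H_n(ℍ_ℂ)` with `ê` unitary, and let `T` be any `ℂ`-linear
bijection of `M_n(ℍ_ℂ)` satisfying `T(x e* y) = T(x)T(y)`, `T(e x* e) = T(x)*` and
`T(xᵈ) = T(x)ᵈ`. Then (i) `dt_n(T(x))` does not depend on the choice of such `T`, and
(ii) `dt_n(x) = dt_n(T(x)) · dt_n(e)` for every `x ∈ H_n(ℍ_ℂ)` (here `D n = dt_{n+1}`). -/
theorem statement6 (D : ∀ m : ℕ, Matrix (Fin (m + 1)) (Fin (m + 1)) HC → HC)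
    (hD : IsDtSeq D) (n : ℕ) (e : Matrix (Fin (n + 1)) (Fin (n + 1)) HC)
    (he : IsHerm e)
    (heu₁ : (hatM e)ᴴ * hatM e = 1) (heu₂ : hatM e * (hatM e)ᴴ = 1)
    (T T' : Matrix (Fin (n + 1)) (Fin (n + 1)) HC ≃ₗ[ℂ]
      Matrix (Fin (n + 1)) (Fin (n + 1)) HC)
    (hTmul : ∀ x y, T (x * mstarB e * y) = T x * T y)
    (hTstar : ∀ x, T (e * mstarB x * e) = mstarB (T x))
    (hTdia : ∀ x, T (mdiaB x) = mdiaB (T x))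
    (hT'mul : ∀ x y, T' (x * mstarB e * y) = T' x * T' y)
    (hT'star : ∀ x, T' (e * mstarB x * e) = mstarB (T' x))
    (hT'dia : ∀ x, T' (mdiaB x) = mdiaB (T' x)) :
    ∀ x : Matrix (Fin (n + 1)) (Fin (n + 1)) HC, IsHerm x →
      D n (T x) = D n (T' x) ∧ D n x = D n (T x) * D n e := fun _ hx =>
  statement6_general hD
    ⟨e, mstarB e, mul_mstarB_self_eq_one_iff.2 heu₂, mstarB_mul_self_eq_one_iff.2 heu₁⟩ he
    T.surjective hTmul (IsHerm.map_of_map_mdiaB hTdia)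
    T'.surjective hT'mul (IsHerm.map_of_map_mdiaB hT'dia) hx
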